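/- There exists a C¹-smooth convex function F : ℝ³ → ℝ such that ∂F/∂uᵢ(u) = aᵢ(e^{u₁}, e^{u₂}, e^{u₃}) for all u = (u₁,u₂,u₃) ∈ ℝ³ and i = 1,2,3. (Equivalently, the C⁰ differential 1-form Σᵢ aᵢ d(ln xᵢ) is closed on ℝ³_{>0} and its potential F is C¹ and convex on all of ℝ³.) -/

import Mathlib

noncomputable section

open Real Set Filter

/-- The generalized Euclidean triangle angle `aᵢ(x)` opposite the side of length `x i`,
for a generalized triangle with (positive) side lengths `x 0, x 1, x 2`:
it is `π` if `x i ≥ x j + x k`, `0` if some other side is at least the sum of the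
remaining two, and otherwise the usual Euclidean angle `arccos((xⱼ²+x_k²−xᵢ²)/(2xⱼx_k))`. -/
noncomputable def genAngle (x : Fin 3 → ℝ) (i : Fin 3) : ℝ :=
  if x (i + 1) + x (i + 2) ≤ x i then Real.pi
  else if x i + x (i + 2) ≤ x (i + 1) ∨ x i + x (i + 1) ≤ x (i + 2) then 0
  else Real.arccos
    ((x (i + 1) ^ 2 + x (i + 2) ^ 2 - x i ^ 2) / (2 * x (i + 1) * x (i + 2)))

def ang (x y z : ℝ) : ℝ := Real.arccos ((y ^ 2 + z ^ 2 - x ^ 2) / (2 * y * z))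

lemma ang_symm (x y z : ℝ) : ang x y z = ang x z y := by
  unfold ang; congr 1; ring

lemma ang_eq_pi {x y z : ℝ} (hy : 0 < y) (hz : 0 < z) (h : y + z ≤ x) : ang x y z = π := by
  unfold ang
  apply Real.arccos_of_le_neg_one
  rw [div_le_iff₀ (by positivity)]
  nlinarith

lemma ang_eq_zero {x y z : ℝ} (hx : 0 < x) (hy : 0 < y) (hz : 0 < z) (h : x + z ≤ y) :
    ang x y z = 0 := by
  unfold ang
  apply Real.arccos_of_one_le
  rw [le_div_iff₀ (by positivity)]
  nlinarith

lemma genAngle_eq (x : Fin 3 → ℝ) (hx : ∀ i, 0 < x i) (i : Fin 3) :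
    genAngle x i = ang (x i) (x (i + 1)) (x (i + 2)) := by
  unfold genAngle
  split_ifs with h1 h2
  · exact (ang_eq_pi (hx _) (hx _) h1).symm
  · rcases h2 with h2 | h2
    · exact (ang_eq_zero (hx _) (hx _) (hx _) h2).symm
    · rw [ang_symm]; exact (ang_eq_zero (hx _) (hx _) (hx _) h2).symm
  · rfl

/-- sixteen times the squared area -/
def heron (x y z : ℝ) : ℝ := (x + y + z) * (y + z - x) * (z + x - y) * (x + y - z)

lemma heron_cyc (x y z : ℝ) : heron y z x = heron x y z := by unfold heron; ring

lemma heron_pos {x y z : ℝ} (hx : 0 < x) (hy : 0 < y) (hz : 0 < z)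
    (h1 : x < y + z) (h2 : y < z + x) (h3 : z < x + y) : 0 < heron x y z := by
  unfold heron
  have := sub_pos.2 h1
  have := sub_pos.2 h2
  have := sub_pos.2 h3
  positivity

lemma ang_cos {x y z : ℝ} (hy : 0 < y) (hz : 0 < z) (h : 0 < heron x y z) :
    Real.cos (ang x y z) = (y ^ 2 + z ^ 2 - x ^ 2) / (2 * y * z) := by
  have key : ((y ^ 2 + z ^ 2 - x ^ 2) / (2 * y * z)) ^ 2 ≤ 1 := by
    rw [div_pow, div_le_one (by positivity)]
    unfold heron at h
    nlinarith
  have := abs_le.1 ((sq_le_one_iff_abs_le_one _).1 key)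
  exact Real.cos_arccos this.1 this.2

lemma ang_sin {x y z : ℝ} (hy : 0 < y) (hz : 0 < z) :
    Real.sin (ang x y z) = √(heron x y z) / (2 * y * z) := by
  unfold ang
  rw [Real.sin_arccos]
  have : 1 - ((y ^ 2 + z ^ 2 - x ^ 2) / (2 * y * z)) ^ 2 = heron x y z / (2 * y * z) ^ 2 := by
    unfold heron; field_simp; ring
  rw [this, Real.sqrt_div' _ (by positivity), Real.sqrt_sq (by positivity)]

lemma ang_nonneg (x y z : ℝ) : 0 ≤ ang x y z := Real.arccos_nonneg _
lemma ang_le_pi (x y z : ℝ) : ang x y z ≤ π := Real.arccos_le_pi _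

lemma ang_pos_lt {x y z : ℝ} (hy : 0 < y) (hz : 0 < z) (h : 0 < heron x y z) :
    0 < ang x y z ∧ ang x y z < π := by
  have hs := ang_sin (x := x) hy hz
  have : 0 < Real.sin (ang x y z) := by rw [hs]; positivity
  constructor
  · refine lt_of_le_of_ne (ang_nonneg _ _ _) fun h0 => ?_
    rw [← h0] at this; simp at this
  · refine lt_of_le_of_ne (ang_le_pi _ _ _) fun h0 => ?_
    rw [h0] at this; simp at this

lemma ang_sum_nondeg {x y z : ℝ} (hx : 0 < x) (hy : 0 < y) (hz : 0 < z)
    (h : 0 < heron x y z) : ang x y z + ang y z x + ang z x y = π := by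
  have hb : 0 < heron y z x := by rwa [heron_cyc]
  have hc : 0 < heron z x y := by rwa [heron_cyc, heron_cyc]
  have ca := ang_cos hy hz h
  have cb := ang_cos hz hx hb
  have cc := ang_cos hx hy hc
  have sa := ang_sin (x := x) hy hz
  have sb := ang_sin (x := y) hz hx
  rw [heron_cyc] at sb
  have pa := ang_pos_lt hy hz h
  have pb := ang_pos_lt hz hx hb
  have pc := ang_pos_lt hx hy hc
  have hS : √(heron x y z) * √(heron x y z) = heron x y z := Real.mul_self_sqrt h.le
  have hSp : 0 < √(heron x y z) := Real.sqrt_pos.2 h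
  have hsin : 0 < Real.sin (ang x y z + ang y z x) := by
    rw [Real.sin_add, ca, cb, sa, sb]
    have : √(heron x y z) / (2 * y * z) * ((z ^ 2 + x ^ 2 - y ^ 2) / (2 * z * x)) +
        (y ^ 2 + z ^ 2 - x ^ 2) / (2 * y * z) * (√(heron x y z) / (2 * z * x))
        = √(heron x y z) / (2 * x * y) := by
      field_simp; ring
    rw [this]; positivity
  have hlt : ang x y z + ang y z x < π := by
    by_contra hcon
    push Not at hcon
    have h2 : 0 ≤ Real.sin (ang x y z + ang y z x - π) :=
      Real.sin_nonneg_of_nonneg_of_le_pi (by linarith) (by linarith)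
    rw [Real.sin_sub_pi] at h2
    linarith
  have hcos : Real.cos (ang x y z + ang y z x) = Real.cos (π - ang z x y) := by
    rw [Real.cos_add, Real.cos_pi_sub, ca, cb, cc, sa, sb, div_mul_div_comm (√_), hS]
    unfold heron
    field_simp; ring
  have := Real.injOn_cos ⟨by linarith, by linarith⟩ ⟨by linarith, by linarith⟩ hcos
  linarith

lemma ang_sum {x y z : ℝ} (hx : 0 < x) (hy : 0 < y) (hz : 0 < z) :
    ang x y z + ang y z x + ang z x y = π := by
  by_cases h1 : y + z ≤ x
  · rw [ang_eq_pi hy hz h1, ang_symm y, ang_eq_zero hy hx hz h1,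
      ang_eq_zero hz hx hy (by linarith)]; ring
  by_cases h2 : z + x ≤ y
  · rw [ang_eq_pi hz hx h2, ang_symm z, ang_eq_zero hz hy hx h2,
      ang_eq_zero hx hy hz (by linarith)]; ring
  by_cases h3 : x + y ≤ z
  · rw [ang_eq_pi hx hy h3, ang_symm x, ang_eq_zero hx hz hy h3,
      ang_eq_zero hy hz hx (by linarith)]; ring
  push Not at h1 h2 h3
  exact ang_sum_nondeg hx hy hz (heron_pos hx hy hz h1 h2 h3)

/-- Lobachevsky-type primitive -/
def lob (t : ℝ) : ℝ := ∫ s in (0:ℝ)..t, Real.log (Real.sin s)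

lemma lob_cont : Continuous lob := by
  unfold lob
  exact intervalIntegral.continuous_primitive (fun a b => intervalIntegrable_log_sin) 0

lemma lob_deriv {t : ℝ} (h0 : 0 < t) (h1 : t < π) : HasDerivAt lob (Real.log (Real.sin t)) t := by
  unfold lob
  have hs := Real.sin_pos_of_pos_of_lt_pi h0 h1
  refine intervalIntegral.integral_hasDerivAt_right intervalIntegrable_log_sin ?_ ?_
  · refine (Measurable.stronglyMeasurable ?_).stronglyMeasurableAtFilter
    exact Real.measurable_log.comp Real.measurable_sin
  · exact (Real.continuousAt_log hs.ne').comp Real.continuous_sin.continuousAt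

lemma cot_form {a b c x y : ℝ} (ha : 0 < a) (hb : 0 < b) (hc : 0 < c) (h : a + b + c = π) :
    0 ≤ Real.cos a / Real.sin a * x ^ 2 + Real.cos b / Real.sin b * y ^ 2
      + Real.cos c / Real.sin c * (x + y) ^ 2 := by
  have sa := Real.sin_pos_of_pos_of_lt_pi ha (by linarith)
  have sb := Real.sin_pos_of_pos_of_lt_pi hb (by linarith)
  have sc := Real.sin_pos_of_pos_of_lt_pi hc (by linarith)
  have hac : Real.sin b = Real.sin a * Real.cos c + Real.cos a * Real.sin c := by
    rw [← Real.sin_add, ← Real.sin_pi_sub]; congr 1; linarith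
  have hca : Real.sin a = Real.sin b * Real.cos c + Real.cos b * Real.sin c := by
    rw [← Real.sin_add, ← Real.sin_pi_sub]; congr 1; linarith
  have pc := Real.sin_sq_add_cos_sq c
  have e1 : Real.cos a / Real.sin a =
      Real.sin b / (Real.sin a * Real.sin c) - Real.cos c / Real.sin c := by
    field_simp; linarith
  have e2 : Real.cos b / Real.sin b =
      Real.sin a / (Real.sin b * Real.sin c) - Real.cos c / Real.sin c := by
    field_simp; linarith
  have : Real.cos a / Real.sin a * x ^ 2 + Real.cos b / Real.sin b * y ^ 2
      + Real.cos c / Real.sin c * (x + y) ^ 2 =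
      (Real.sin b * x + Real.sin a * Real.cos c * y) ^ 2 / (Real.sin a * Real.sin b * Real.sin c)
      + y ^ 2 * Real.sin a * Real.sin c / Real.sin b := by
    rw [e1, e2]
    field_simp
    linear_combination (-(Real.sin a)^2 * y^2) * pc
  rw [this]
  positivity

lemma lob_convex {a b c a' b' c' : ℝ} (ha : 0 < a) (hb : 0 < b) (hc : 0 < c)
    (h : a + b + c = π) (ha' : 0 ≤ a') (hb' : 0 ≤ b') (hc' : 0 ≤ c') (h' : a' + b' + c' = π) :
    Real.log (Real.sin a) * (a' - a) + Real.log (Real.sin b) * (b' - b)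
      + Real.log (Real.sin c) * (c' - c) ≤
    (lob a' + lob b' + lob c') - (lob a + lob b + lob c) := by
  have hpos : ∀ p p' t : ℝ, 0 < p → 0 ≤ p' → t ∈ Ico (0:ℝ) 1 → 0 < p + t * (p' - p) := by
    intro p p' t hp hp' ht
    have h1 : 0 < (1 - t) * p := mul_pos (by linarith [ht.2]) hp
    have h2 : 0 ≤ t * p' := mul_nonneg ht.1 hp'
    linarith
  have hsum : ∀ t : ℝ, (a + t * (a' - a)) + (b + t * (b' - b)) + (c + t * (c' - c)) = π := by
    intro t; linear_combination (1 - t) * h + t * h'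
  have hall : ∀ t ∈ Ico (0:ℝ) 1, (0 < a + t * (a' - a) ∧ a + t * (a' - a) < π) ∧
      (0 < b + t * (b' - b) ∧ b + t * (b' - b) < π) ∧
      (0 < c + t * (c' - c) ∧ c + t * (c' - c) < π) := by
    intro t ht
    have h1 := hpos a a' t ha ha' ht
    have h2 := hpos b b' t hb hb' ht
    have h3 := hpos c c' t hc hc' ht
    have := hsum t
    exact ⟨⟨h1, by linarith⟩, ⟨h2, by linarith⟩, ⟨h3, by linarith⟩⟩
  have hlin : ∀ p p' t : ℝ, HasDerivAt (fun t => p + t * (p' - p)) (p' - p) t := by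
    intro p p' t
    simpa using ((hasDerivAt_id t).mul_const (p' - p)).const_add p
  have hd1 : ∀ p p' t : ℝ, 0 < p + t * (p' - p) ∧ p + t * (p' - p) < π →
      HasDerivAt (fun t => lob (p + t * (p' - p)))
        (Real.log (Real.sin (p + t * (p' - p))) * (p' - p)) t := by
    intro p p' t ht
    exact (lob_deriv ht.1 ht.2).comp t (hlin p p' t)
  have hd2 : ∀ p p' t : ℝ, 0 < p + t * (p' - p) ∧ p + t * (p' - p) < π →
      HasDerivAt (fun t => Real.log (Real.sin (p + t * (p' - p))) * (p' - p))
        (Real.cos (p + t * (p' - p)) / Real.sin (p + t * (p' - p)) * (p' - p) ^ 2) t := by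
    intro p p' t ht
    have hs := Real.sin_pos_of_pos_of_lt_pi ht.1 ht.2
    exact ((((hlin p p' t).sin).log hs.ne').mul_const (p' - p)).congr_deriv (by ring)
  set g : ℝ → ℝ := fun t => lob (a + t * (a' - a)) + lob (b + t * (b' - b))
    + lob (c + t * (c' - c)) with hg
  set g' : ℝ → ℝ := fun t => Real.log (Real.sin (a + t * (a' - a))) * (a' - a)
    + Real.log (Real.sin (b + t * (b' - b))) * (b' - b)
    + Real.log (Real.sin (c + t * (c' - c))) * (c' - c) with hg'
  have hG : ∀ t ∈ Ico (0:ℝ) 1, HasDerivAt g (g' t) t := by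
    intro t ht
    obtain ⟨h1, h2, h3⟩ := hall t ht
    exact ((hd1 _ _ _ h1).add (hd1 _ _ _ h2)).add (hd1 _ _ _ h3)
  have hG' : ∀ t ∈ Ico (0:ℝ) 1, ∃ d, 0 ≤ d ∧ HasDerivAt g' d t := by
    intro t ht
    obtain ⟨h1, h2, h3⟩ := hall t ht
    refine ⟨_, ?_, ((hd2 _ _ _ h1).add (hd2 _ _ _ h2)).add (hd2 _ _ _ h3)⟩
    have := cot_form (x := a' - a) (y := b' - b) h1.1 h2.1 h3.1 (hsum t)
    have e : c' - c = -((a' - a) + (b' - b)) := by linarith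
    have e2 : (c' - c) ^ 2 = ((a' - a) + (b' - b)) ^ 2 := by rw [e]; ring
    rw [e2]; exact this
  have hmono : MonotoneOn g' (Ico 0 1) := by
    refine monotoneOn_of_deriv_nonneg (convex_Ico 0 1) ?_ ?_ ?_
    · intro t ht
      obtain ⟨d, -, hd⟩ := hG' t ht
      exact hd.continuousAt.continuousWithinAt
    · intro t ht
      obtain ⟨d, -, hd⟩ := hG' t (interior_subset ht)
      exact hd.differentiableAt.differentiableWithinAt
    · intro t ht
      obtain ⟨d, h0, hd⟩ := hG' t (interior_subset ht)
      rw [hd.deriv]; exact h0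
  have hgc : Continuous g := by
    have := lob_cont
    simp only [hg]
    fun_prop
  obtain ⟨s, hs, hs'⟩ := exists_hasDerivAt_eq_slope g g' one_pos hgc.continuousOn
    (fun t ht => hG t ⟨ht.1.le, ht.2⟩)
  have h01 := hmono ⟨le_rfl, one_pos⟩ ⟨hs.1.le, hs.2⟩ hs.1.le
  rw [hs'] at h01
  simpa [hg, hg'] using h01

/-- the potential -/
def pot (u v w : ℝ) : ℝ :=
  ang (exp u) (exp v) (exp w) * u + ang (exp v) (exp w) (exp u) * v
  + ang (exp w) (exp u) (exp v) * w
  - (lob (ang (exp u) (exp v) (exp w)) + lob (ang (exp v) (exp w) (exp u))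
    + lob (ang (exp w) (exp u) (exp v)))

def Opt (u v w : ℝ) : Prop := ∀ a b c : ℝ, 0 ≤ a → 0 ≤ b → 0 ≤ c → a + b + c = π →
  a * u + b * v + c * w - (lob a + lob b + lob c) ≤ pot u v w

lemma pot_cyc (u v w : ℝ) : pot v w u = pot u v w := by unfold pot; ring

lemma Opt.cyc {u v w : ℝ} (h : Opt u v w) : Opt v w u := by
  intro a b c ha hb hc hs
  have := h c a b hc ha hb (by linarith)
  rw [pot_cyc]; linarith

lemma log_sin_ang {u v w : ℝ} (h : 0 < heron (exp u) (exp v) (exp w)) :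
    Real.log (Real.sin (ang (exp u) (exp v) (exp w))) =
      u + (Real.log (√(heron (exp u) (exp v) (exp w)) / 2) - u - v - w) := by
  rw [ang_sin (exp_pos _) (exp_pos _)]
  have hS : 0 < √(heron (exp u) (exp v) (exp w)) := Real.sqrt_pos.2 h
  rw [show √(heron (exp u) (exp v) (exp w)) / (2 * exp v * exp w)
    = √(heron (exp u) (exp v) (exp w)) / 2 / (exp v * exp w) by field_simp,
    Real.log_div (by positivity) (by positivity), Real.log_mul (by positivity) (by positivity),
    Real.log_exp, Real.log_exp]
  ring

lemma opt_nondeg {u v w : ℝ} (h : 0 < heron (exp u) (exp v) (exp w)) : Opt u v w := by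
  intro a b c ha hb hc hs
  have hb' : 0 < heron (exp v) (exp w) (exp u) := by rwa [heron_cyc]
  have hc' : 0 < heron (exp w) (exp u) (exp v) := by rwa [heron_cyc, heron_cyc]
  have e1 := log_sin_ang h
  have e2 := log_sin_ang hb'
  have e3 := log_sin_ang hc'
  have hsum := ang_sum (exp_pos u) (exp_pos v) (exp_pos w)
  have key := lob_convex (ang_pos_lt (exp_pos _) (exp_pos _) h).1
    (ang_pos_lt (exp_pos _) (exp_pos _) hb').1 (ang_pos_lt (exp_pos _) (exp_pos _) hc').1
    hsum ha hb hc hs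
  rw [e1, e2, e3, heron_cyc (exp v), heron_cyc (exp u)] at key
  unfold pot
  generalize Real.log (√(heron (exp u) (exp v) (exp w)) / 2) = k at key
  generalize ang (exp u) (exp v) (exp w) = A at *
  generalize ang (exp v) (exp w) (exp u) = B at *
  generalize ang (exp w) (exp u) (exp v) = C at *
  have : (k - u - v - w) * (a + b + c - (A + B + C)) = 0 := by rw [hs, hsum]; ring
  linarith

lemma ang_cont : Continuous fun p : ℝ × ℝ × ℝ => ang (exp p.1) (exp p.2.1) (exp p.2.2) := by
  unfold ang
  refine Real.continuous_arccos.comp (Continuous.div (by fun_prop) (by fun_prop) ?_)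
  intro p; positivity

lemma pot_cont (v w : ℝ) : Continuous fun u => pot u v w := by
  have h1 : Continuous fun u => ang (exp u) (exp v) (exp w) :=
    ang_cont.comp (g := fun p : ℝ × ℝ × ℝ => ang (exp p.1) (exp p.2.1) (exp p.2.2))
      (f := fun u : ℝ => (u, v, w)) (by fun_prop)
  have h2 : Continuous fun u => ang (exp v) (exp w) (exp u) :=
    ang_cont.comp (g := fun p : ℝ × ℝ × ℝ => ang (exp p.1) (exp p.2.1) (exp p.2.2))
      (f := fun u : ℝ => (v, w, u)) (by fun_prop)
  have h3 : Continuous fun u => ang (exp w) (exp u) (exp v) :=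
    ang_cont.comp (g := fun p : ℝ × ℝ × ℝ => ang (exp p.1) (exp p.2.1) (exp p.2.2))
      (f := fun u : ℝ => (w, u, v)) (by fun_prop)
  have := lob_cont
  unfold pot
  fun_prop

lemma opt_boundary {u v w : ℝ} (h : exp u = exp v + exp w) : Opt u v w := by
  intro a b c ha hb hc hs
  have hev : ∀ᶠ t in nhdsWithin u (Iio u),
      a * t + b * v + c * w - (lob a + lob b + lob c) ≤ pot t v w := by
    have h1 : ∀ᶠ t in nhds u, exp v - exp w < exp t :=
      (Real.continuous_exp.tendsto u).eventually_const_lt (by linarith [exp_pos w])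
    have h2 : ∀ᶠ t in nhds u, exp w - exp v < exp t :=
      (Real.continuous_exp.tendsto u).eventually_const_lt (by linarith [exp_pos v])
    filter_upwards [h1.filter_mono nhdsWithin_le_nhds, h2.filter_mono nhdsWithin_le_nhds,
      self_mem_nhdsWithin] with t h1 h2 ht
    have h3 : exp t < exp u := Real.exp_lt_exp.2 ht
    exact opt_nondeg (heron_pos (exp_pos _) (exp_pos _) (exp_pos _) (by linarith) (by linarith)
      (by linarith)) a b c ha hb hc hs
  refine le_of_tendsto_of_tendsto ?_ ((pot_cont v w).continuousWithinAt (s := Iio u)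
    (x := u)).tendsto hev
  have : Continuous fun t => a * t + b * v + c * w - (lob a + lob b + lob c) := by fun_prop
  exact (this.continuousWithinAt (s := Iio u) (x := u)).tendsto

lemma pot_deg {u v w : ℝ} (h : exp v + exp w ≤ exp u) :
    pot u v w = π * u - (lob π + lob 0 + lob 0) := by
  unfold pot
  rw [ang_eq_pi (exp_pos _) (exp_pos _) h, ang_symm (exp v),
    ang_eq_zero (exp_pos _) (exp_pos _) (exp_pos _) h,
    ang_eq_zero (exp_pos w) (exp_pos _) (exp_pos _) (by linarith)]
  ring

lemma opt_deg {u v w : ℝ} (h : exp v + exp w ≤ exp u) : Opt u v w := by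
  intro a b c ha hb hc hs
  have hpos : 0 < exp v + exp w := by positivity
  have he : exp (Real.log (exp v + exp w)) = exp v + exp w := Real.exp_log hpos
  have h1 := opt_boundary he a b c ha hb hc hs
  have hle : Real.log (exp v + exp w) ≤ u := (Real.log_le_iff_le_exp hpos).2 h
  rw [pot_deg he.ge] at h1
  rw [pot_deg h]
  nlinarith

lemma opt_all (u v w : ℝ) : Opt u v w := by
  by_cases h1 : exp v + exp w ≤ exp u
  · exact opt_deg h1
  by_cases h2 : exp w + exp u ≤ exp v
  · exact (opt_deg h2).cyc.cyc
  by_cases h3 : exp u + exp v ≤ exp w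
  · exact (opt_deg h3).cyc
  push Not at h1 h2 h3
  exact opt_nondeg (heron_pos (exp_pos _) (exp_pos _) (exp_pos _) h1 h2 h3)

/-- the angles as functions of the logarithmic lengths -/
def angv (u : Fin 3 → ℝ) (i : Fin 3) : ℝ := ang (exp (u i)) (exp (u (i + 1))) (exp (u (i + 2)))

lemma angv_cont : Continuous angv := by
  refine continuous_pi fun i => ?_
  exact ang_cont.comp (g := fun p : ℝ × ℝ × ℝ => ang (exp p.1) (exp p.2.1) (exp p.2.2))
      (f := fun u : Fin 3 → ℝ => (u i, u (i + 1), u (i + 2))) (by fun_prop)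

def potv (u : Fin 3 → ℝ) : ℝ := pot (u 0) (u 1) (u 2)

lemma potv_sub (u v : Fin 3 → ℝ) : potv u + ∑ i, angv u i * (v i - u i) ≤ potv v := by
  have hsum := ang_sum (exp_pos (u 0)) (exp_pos (u 1)) (exp_pos (u 2))
  have := opt_all (v 0) (v 1) (v 2) _ _ _ (ang_nonneg _ _ _) (ang_nonneg _ _ _)
    (ang_nonneg _ _ _) hsum
  refine le_trans (le_of_eq ?_) this
  simp only [potv, pot, Fin.sum_univ_three, angv]
  norm_num [show (1:Fin 3) + 1 = 2 from rfl, show (1:Fin 3) + 2 = 0 from rfl,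
    show (2:Fin 3) + 1 = 0 from rfl, show (2:Fin 3) + 2 = 1 from rfl]
  ring

/-- the gradient as a continuous linear map -/
def grad (u : Fin 3 → ℝ) : (Fin 3 → ℝ) →L[ℝ] ℝ :=
  ∑ i, angv u i • (ContinuousLinearMap.proj i : (Fin 3 → ℝ) →L[ℝ] ℝ)

lemma grad_apply (u x : Fin 3 → ℝ) : grad u x = ∑ i, angv u i * x i := by
  simp [grad]

lemma grad_cont : Continuous grad := by
  unfold grad
  have : ∀ i, Continuous fun u => angv u i := fun i => (continuous_apply i).comp angv_cont
  fun_prop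

lemma potv_hasFDerivAt (u : Fin 3 → ℝ) : HasFDerivAt potv (grad u) u := by
  rw [hasFDerivAt_iff_isLittleO, Asymptotics.isLittleO_iff]
  intro ε hε
  have hc : ∀ᶠ v in nhds u, ‖grad v - grad u‖ < ε := by
    have := (grad_cont.tendsto u)
    rw [tendsto_iff_norm_sub_tendsto_zero] at this
    exact this.eventually_lt_const hε
  filter_upwards [hc] with v hv
  have h1 := potv_sub u v
  have h2 := potv_sub v u
  have e1 : ∑ i, angv u i * (v i - u i) = grad u (v - u) := by simp [grad_apply]
  have e2 : ∑ i, angv v i * (u i - v i) = - grad v (v - u) := by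
    rw [grad_apply, ← Finset.sum_neg_distrib]
    exact Finset.sum_congr rfl fun i _ => by simp only [Pi.sub_apply]; ring
  rw [e1] at h1
  rw [e2] at h2
  have h3 : ‖(grad v - grad u) (v - u)‖ ≤ ε * ‖v - u‖ :=
    ((grad v - grad u).le_opNorm _).trans (by gcongr)
  rw [Real.norm_eq_abs, abs_of_nonneg (by linarith)]
  have h4 := (le_abs_self _).trans h3
  rw [sub_apply] at h4
  linarith

lemma potv_convex : ConvexOn ℝ Set.univ potv := by
  refine ⟨convex_univ, fun x _ y _ a b ha hb hab => ?_⟩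
  have h1 := potv_sub (a • x + b • y) x
  have h2 := potv_sub (a • x + b • y) y
  have e : a * ∑ i, angv (a • x + b • y) i * (x i - (a • x + b • y) i)
      + b * ∑ i, angv (a • x + b • y) i * (y i - (a • x + b • y) i) = 0 := by
    rw [Finset.mul_sum, Finset.mul_sum, ← Finset.sum_add_distrib]
    refine Finset.sum_eq_zero fun i _ => ?_
    simp only [Pi.add_apply, Pi.smul_apply, smul_eq_mul]
    obtain rfl : b = 1 - a := by linarith
    ring
  have h3 := mul_le_mul_of_nonneg_left h1 ha
  have h4 := mul_le_mul_of_nonneg_left h2 hb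
  simp only [smul_eq_mul]
  have h5 : a * potv (a • x + b • y) + b * potv (a • x + b • y) = potv (a • x + b • y) := by
    rw [← add_mul, hab, one_mul]
  linarith

/-- there is a `C¹` convex potential `F : ℝ³ → ℝ` with
`∂F/∂uᵢ(u) = aᵢ(e^{u₁}, e^{u₂}, e^{u₃})`. -/
theorem exists_C1_convex_potential_of_angles :
    ∃ F : (Fin 3 → ℝ) → ℝ, ContDiff ℝ 1 F ∧ ConvexOn ℝ Set.univ F ∧
      ∀ (u : Fin 3 → ℝ) (i : Fin 3),
        fderiv ℝ F u (Pi.single i 1) = genAngle (fun j => Real.exp (u j)) i := by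
  refine ⟨potv, contDiff_one_iff_hasFDerivAt.2 ⟨grad, grad_cont, potv_hasFDerivAt⟩,
    potv_convex, fun u i => ?_⟩
  rw [(potv_hasFDerivAt u).fderiv, grad_apply, genAngle_eq _ (fun _ => Real.exp_pos _)]
  simp [Pi.single_apply, angv]
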